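/- arXiv:2603.05007 — 2 statements merged into one kernel-verified Lean document; each statement's English description precedes it below -/
import Mathlib

section
/- Let V be a finite set, p a pairing of V, and let k and s be positive integers. Let F be a finite family of k-element subsets of V. Then there exists a transversal S of p such that the number of sets e ∈ F with |e ∩ S| ≥ s is at most ∑_{e ∈ F} 2^{−i(e)} · (∑_{j=0}^{i(e)} [k − i(e) + 2j ≥ 2s] · C(i(e), j)), where [·] equals 1 if the condition holds and 0 otherwise and C denotes the binomial coefficient. -/
open Finset

/-!
Start from any transversal, pick a uniformly random finite set `A`, and let every element of `A`
swap the chosen element of its pair. A pair inside `e` always contributes exactly one element to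
the transversal, so only the `i(e)` elements whose partner lies outside `e` matter; as no two of
these are paired, the part of them that is chosen is uniformly distributed among all their subsets.
Hence `|e ∩ S| = (|e| - i(e)) / 2 + j` with probability `2^{-i(e)} C(i(e), j)`, and some `S` does
at least as well as the average.
-/

section PowersetSymmDiff

variable {α M : Type*} [DecidableEq α] [AddCommMonoid M]

lemma sum_powerset_symmDiff {A U : Finset α} (hA : A ⊆ U) (f : Finset α → M) :
    ∑ B ∈ U.powerset, f (symmDiff A B) = ∑ B ∈ U.powerset, f B := by
  have symmDiff_mem : ∀ B ∈ U.powerset, symmDiff A B ∈ U.powerset := fun B hB =>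
    mem_powerset.2 (symmDiff_le_sup.trans (union_subset hA (mem_powerset.1 hB)))
  exact sum_bij' (fun B _ => symmDiff A B) (fun B _ => symmDiff A B) symmDiff_mem symmDiff_mem
    (fun B _ => symmDiff_symmDiff_cancel_left A B) (fun B _ => symmDiff_symmDiff_cancel_left A B)
    (fun _ _ => rfl)

end PowersetSymmDiff

section Transversal

variable {V : Type*} {p : V → V} {S : Set V}

/-- A transversal of the pairing `p`: a set that contains exactly one of `v` and `p v` for every
`v`. It is a `Set`, since a transversal of an infinite type is infinite. -/
def IsTransversal (p : V → V) (S : Set V) : Prop :=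
  ∀ v, v ∈ S ↔ p v ∉ S

/-- The set obtained from `S` when every element of `A` swaps the membership of itself and of its
partner. Two partners that both lie in `A` cancel, which makes the operation additive in `A`. -/
def swapPairs (p : V → V) (S A : Set V) : Set V :=
  symmDiff S (symmDiff A (p ⁻¹' A))

/-- The elements of `e` whose partner lies outside `e`; their number is the paper's `i(e)`. -/
def unpaired [DecidableEq V] (p : V → V) (e : Finset V) : Finset V :=
  {v ∈ e | p v ∉ e}

lemma exists_isTransversal (hp : Function.Involutive p) (hne : ∀ v, p v ≠ v) :
    ∃ S, IsTransversal p S := by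
  classical
  let _ : LinearOrder V := linearOrderOfSTO WellOrderingRel
  refine ⟨{v | v < p v}, fun v => ?_⟩
  simp only [Set.mem_ofPred_eq, hp v, not_lt]
  exact (hne v).symm.le_iff_lt.symm

lemma IsTransversal.swapPairs (hS : IsTransversal p S) (hp : Function.Involutive p) (A : Set V) :
    IsTransversal p (swapPairs p S A) := by
  intro v
  have := hS v
  simp only [_root_.swapPairs, Set.mem_symmDiff, Set.mem_preimage, hp v]
  tauto

lemma swapPairs_symmDiff (p : V → V) (S A B : Set V) :
    swapPairs p S (symmDiff A B) = swapPairs p (swapPairs p S A) B := by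
  rw [swapPairs, Set.preimage_symmDiff, symmDiff_symmDiff_symmDiff_comm, ← symmDiff_assoc,
    swapPairs, swapPairs]

open Classical in
lemma filter_mem_swapPairs {I B : Finset V} (hI : ∀ v ∈ I, p v ∉ I) (hB : B ⊆ I) (S : Set V) :
    {v ∈ I | v ∈ swapPairs p S B} = symmDiff {v ∈ I | v ∈ S} B := by
  ext v
  have partner_notMem : v ∈ I → p v ∉ B := fun hv hpv => hI v hv (hB hpv)
  have mem_of_mem : v ∈ B → v ∈ I := @hB v
  simp only [swapPairs, mem_filter, mem_symmDiff, Set.mem_symmDiff, Set.mem_preimage, mem_coe]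
  tauto

open Classical in
lemma two_pow_nsmul_sum_swapPairs {M : Type*} [AddCommMonoid M] {I U : Finset V}
    (hI : ∀ v ∈ I, p v ∉ I) (hIU : I ⊆ U) (S : Set V) (f : Finset V → M) :
    2 ^ #I • ∑ A ∈ U.powerset, f {v ∈ I | v ∈ swapPairs p S A} =
      2 ^ #U • ∑ B ∈ I.powerset, f B :=
  calc 2 ^ #I • ∑ A ∈ U.powerset, f {v ∈ I | v ∈ swapPairs p S A}
      = ∑ _B ∈ I.powerset, ∑ A ∈ U.powerset, f {v ∈ I | v ∈ swapPairs p S A} := by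
        rw [sum_const, card_powerset]
    _ = ∑ B ∈ I.powerset, ∑ A ∈ U.powerset,
          f (symmDiff {v ∈ I | v ∈ swapPairs p S A} B) := by
        refine sum_congr rfl fun B hB => ?_
        have hBI : B ⊆ I := mem_powerset.1 hB
        rw [← sum_powerset_symmDiff (hBI.trans hIU)]
        refine sum_congr rfl fun A _ => ?_
        rw [symmDiff_comm B A, coe_symmDiff, swapPairs_symmDiff, filter_mem_swapPairs hI hBI]
    _ = ∑ _A ∈ U.powerset, ∑ B ∈ I.powerset, f B := by
        rw [sum_comm]
        exact sum_congr rfl fun A _ => sum_powerset_symmDiff (filter_subset _ I) f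
    _ = 2 ^ #U • ∑ B ∈ I.powerset, f B := by
        rw [sum_const, card_powerset]

open Classical in
lemma exists_isTransversal_sum_le {ι 𝕜 : Type*} [Field 𝕜] [LinearOrder 𝕜] [IsStrictOrderedRing 𝕜]
    (hp : Function.Involutive p) (hne : ∀ v, p v ≠ v) (F : Finset ι) (I : ι → Finset V)
    (hI : ∀ i ∈ F, ∀ v ∈ I i, p v ∉ I i) (f : ι → Finset V → 𝕜) :
    ∃ S, IsTransversal p S ∧
      ∑ i ∈ F, f i {v ∈ I i | v ∈ S} ≤ ∑ i ∈ F, (2 ^ #(I i))⁻¹ * ∑ B ∈ (I i).powerset, f i B := by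
  obtain ⟨S, hS⟩ := exists_isTransversal hp hne
  let U := F.biUnion I
  have mean_eq : ∀ i ∈ F, ∑ A ∈ U.powerset, f i {v ∈ I i | v ∈ swapPairs p S A} =
      2 ^ #U * ((2 ^ #(I i))⁻¹ * ∑ B ∈ (I i).powerset, f i B) := by
    intro i hi
    have h := two_pow_nsmul_sum_swapPairs (hI i hi) (subset_biUnion_of_mem I hi) S (f i)
    simp only [nsmul_eq_mul, Nat.cast_pow, Nat.cast_ofNat] at h
    rw [mul_left_comm, ← h, inv_mul_cancel_left₀ (by positivity)]
  obtain ⟨A, -, hA⟩ : ∃ A ∈ U.powerset, ∑ i ∈ F, f i {v ∈ I i | v ∈ swapPairs p S A} ≤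
      ∑ i ∈ F, (2 ^ #(I i))⁻¹ * ∑ B ∈ (I i).powerset, f i B := by
    refine exists_le_of_sum_le (powerset_nonempty U) (le_of_eq ?_)
    rw [sum_comm, sum_congr rfl mean_eq, ← mul_sum, sum_const, card_powerset, nsmul_eq_mul,
      Nat.cast_pow, Nat.cast_ofNat]
  exact ⟨swapPairs p S A, hS.swapPairs hp A, hA⟩

lemma IsTransversal.card_filter_mem_eq_card_filter_notMem [DecidablePred (· ∈ S)]
    (hS : IsTransversal p S) (hp : Function.Involutive p) {D : Finset V} (hD : ∀ v ∈ D, p v ∈ D) :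
    #{v ∈ D | v ∈ S} = #{v ∈ D | v ∉ S} := by
  refine card_nbij' p p (fun v hv => ?_) (fun v hv => ?_) (fun v _ => hp v) (fun v _ => hp v)
  · simp only [coe_filter, Set.mem_ofPred_eq] at hv ⊢
    exact ⟨hD v hv.1, (hS v).1 hv.2⟩
  · simp only [coe_filter, Set.mem_ofPred_eq] at hv ⊢
    exact ⟨hD v hv.1, not_not.1 (mt (hS v).2 hv.2)⟩

lemma IsTransversal.two_mul_card_filter_mem_add [DecidableEq V] [DecidablePred (· ∈ S)]
    (hS : IsTransversal p S) (hp : Function.Involutive p) (e : Finset V) :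
    2 * #{v ∈ e | v ∈ S} + #(unpaired p e) = #e + 2 * #{v ∈ unpaired p e | v ∈ S} := by
  have card_e : #{v ∈ e | p v ∈ e} + #(unpaired p e) = #e := card_filter_add_card_filter_not _
  have card_e_inter : #{v ∈ {v ∈ e | p v ∈ e} | v ∈ S} + #{v ∈ unpaired p e | v ∈ S} =
      #{v ∈ e | v ∈ S} := by
    rw [unpaired, filter_comm, filter_comm (fun v => p v ∉ e)]
    exact card_filter_add_card_filter_not _
  have card_paired : #{v ∈ {v ∈ e | p v ∈ e} | v ∈ S} + #{v ∈ {v ∈ e | p v ∈ e} | v ∉ S} =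
      #{v ∈ e | p v ∈ e} := card_filter_add_card_filter_not _
  have card_half : #{v ∈ {v ∈ e | p v ∈ e} | v ∈ S} = #{v ∈ {v ∈ e | p v ∈ e} | v ∉ S} := by
    refine hS.card_filter_mem_eq_card_filter_notMem hp fun v hv => ?_
    rw [mem_filter] at hv ⊢
    exact ⟨hv.2, (hp v).symm ▸ hv.1⟩
  lia

open Classical in
theorem exists_transversal_score_le_general [DecidableEq V] (hp : Function.Involutive p)
    (hne : ∀ v, p v ≠ v) (s : ℕ) (F : Finset (Finset V)) :
    ∃ S, IsTransversal p S ∧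
      (#{e ∈ F | s ≤ #{v ∈ e | v ∈ S}} : ℝ) ≤
        ∑ e ∈ F, (2 : ℝ) ^ (-(#(unpaired p e) : ℤ)) *
          ∑ j ∈ range (#(unpaired p e) + 1),
            if #e + 2 * j ≥ 2 * s + #(unpaired p e)
              then ((#(unpaired p e)).choose j : ℝ) else 0 := by
  let score (e B : Finset V) : ℝ := if #e + 2 * #B ≥ 2 * s + #(unpaired p e) then 1 else 0
  obtain ⟨S, hS, hle⟩ := exists_isTransversal_sum_le hp hne F (unpaired p)
    (fun e _ v hv hpv => (mem_filter.1 hv).2 (mem_filter.1 hpv).1) score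
  refine ⟨S, hS, ?_⟩
  calc (#{e ∈ F | s ≤ #{v ∈ e | v ∈ S}} : ℝ)
      = ∑ e ∈ F, score e {v ∈ unpaired p e | v ∈ S} := by
        rw [natCast_card_filter]
        refine sum_congr rfl fun e _ => if_congr ?_ rfl rfl
        have := hS.two_mul_card_filter_mem_add hp e
        lia
    _ ≤ ∑ e ∈ F, (2 ^ #(unpaired p e))⁻¹ * ∑ B ∈ (unpaired p e).powerset, score e B := hle
    _ = _ := by
        refine sum_congr rfl fun e _ => ?_
        rw [zpow_neg, zpow_natCast, sum_powerset_apply_card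
          fun j => if #e + 2 * j ≥ 2 * s + #(unpaired p e) then (1 : ℝ) else 0]
        simp only [nsmul_eq_mul, mul_ite, mul_one, mul_zero]

end Transversal

/-- For a pairing `p` of a finite set `V` and a family `F` of `k`-element subsets of `V`,
there exists a transversal `S` of `p` such that the number of sets `e ∈ F` with
`|e ∩ S| ≥ s` is at most
`∑_{e ∈ F} 2^{−i(e)} · ∑_{j=0}^{i(e)} [k − i(e) + 2j ≥ 2s] · C(i(e), j)`,
where `i(e)` is the number of `v ∈ e` with `p v ∉ e`. -/
theorem exists_transversal_score_le {V : Type*} [Fintype V] [DecidableEq V]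
    (p : V → V) (hp_inv : ∀ v, p (p v) = v) (hp_ne : ∀ v, p v ≠ v)
    (k s : ℕ) (hk : 0 < k) (hs : 0 < s)
    (F : Finset (Finset V)) (hF : ∀ e ∈ F, e.card = k) :
    ∃ S : Finset V, (∀ v, v ∈ S ↔ p v ∉ S) ∧
      ((F.filter (fun e => s ≤ (e ∩ S).card)).card : ℝ)
        ≤ ∑ e ∈ F,
            (2 : ℝ) ^ (-((e.filter (fun v => p v ∉ e)).card : ℤ)) *
              ∑ j ∈ Finset.range ((e.filter (fun v => p v ∉ e)).card + 1),
                (if k + 2 * j ≥ 2 * s + (e.filter (fun v => p v ∉ e)).card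
                  then (Nat.choose (e.filter (fun v => p v ∉ e)).card j : ℝ) else 0) := by
  classical
  obtain ⟨S, hS, hle⟩ := exists_transversal_score_le_general hp_inv hp_ne s F
  refine ⟨S.toFinset, fun v => by simpa only [Set.mem_toFinset] using hS v, ?_⟩
  simp only [← filter_mem_eq_inter, Set.mem_toFinset]
  exact hle.trans_eq (sum_congr rfl fun e he => by rw [hF e he]; rfl)
end

section
/- Let V be a finite set and F a finite family of n six-element subsets of V such that every element of V belongs to exactly 3 members of F and every pair of distinct elements of V belongs to at most 2 members of F. Then for every pairing p of V there exists a transversal S of p such that the number of e ∈ F with |e ∩ S| ≥ 3 is at most 85n/96, i.e., 96·|{e ∈ F : |e ∩ S| ≥ 3}| ≤ 85n. -/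
open Finset

/-!
Choose a transversal `S` of `p` uniformly at random and fix a member `e` of the family. Each pair
of `p` inside `e` contributes exactly one point to `e ∩ S`, and the points of `e` whose partner
lies outside `e` belong to `S` independently with probability `1/2`. So if `e` has `k` points and
contains `j` pairs, then `#(e ∩ S)` is distributed as `j + Bin(k - 2j, 1/2)`, and the probability
that `#(e ∩ S) ≥ s` depends on `j` alone. Double counting bounds the average of `j` over the family
by `qk/(2ℓ)`, hence any nondecreasing affine majorant of this probability, evaluated at `qk/(2ℓ)`,
bounds the expected proportion of the `e` with `#(e ∩ S) ≥ s`, and some transversal does at least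
as well as the average.
-/

open Function
open scoped symmDiff

section CoinTosses

/-- The probability of at least `t` heads in `m` tosses of a fair coin. -/
def coinTail (m t : ℕ) : ℚ :=
  (∑ i ∈ Icc t m, m.choose i : ℕ) / 2 ^ m

theorem card_filter_powerset_le_card {α : Type*} (U : Finset α) (t : ℕ) :
    (#{T ∈ U.powerset | t ≤ #T} : ℚ) = coinTail #U t * 2 ^ #U := by
  have hfilter : {i ∈ range (#U + 1) | t ≤ i} = Icc t #U := by grind
  rw [coinTail, div_mul_cancel₀ _ (by positivity), card_filter,
    sum_powerset_apply_card fun i ↦ if t ≤ i then 1 else 0]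
  simp only [smul_eq_mul, mul_ite, mul_one, mul_zero]
  rw [← sum_filter, hfilter]

end CoinTosses

section Transversals

variable {V : Type*} [Fintype V] [DecidableEq V] {p : V → V}

/-- The transversals of `p`: the sets containing exactly one point of each pair `{v, p v}`. -/
def transversals (p : V → V) : Finset (Finset V) :=
  {S | ∀ v, v ∈ S ↔ p v ∉ S}

theorem mem_transversals {S : Finset V} : S ∈ transversals p ↔ ∀ v, v ∈ S ↔ p v ∉ S := by
  simp only [transversals, mem_filter_univ]

theorem transversals_nonempty (hp : Involutive p) (hp_ne : ∀ v, p v ≠ v) :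
    (transversals p).Nonempty := by
  let rank := Fintype.equivFin V
  refine ⟨({v | rank v < rank (p v)} : Finset V), mem_transversals.2 fun v ↦ ?_⟩
  have hne : rank v ≠ rank (p v) := rank.injective.ne (hp_ne v).symm
  simp only [mem_filter_univ, hp v, not_lt]
  exact ⟨le_of_lt, fun h ↦ lt_of_le_of_ne h hne⟩

theorem symmDiff_mem_transversals {S W : Finset V} (hS : S ∈ transversals p)
    (hW : ∀ v, v ∈ W ↔ p v ∈ W) : S ∆ W ∈ transversals p := by
  rw [mem_transversals] at *
  intro v
  have hSv := hS v
  have hWv := hW v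
  simp only [mem_symmDiff]
  tauto

theorem card_transversals_inter_eq_le (hp : Involutive p) {U T T' : Finset V}
    (hU : ∀ v ∈ U, p v ∉ U) (hT : T ⊆ U) (hT' : T' ⊆ U) :
    #{S ∈ transversals p | S ∩ U = T} ≤ #{S ∈ transversals p | S ∩ U = T'} := by
  let W : Finset V := {v | v ∈ T ∆ T' ∨ p v ∈ T ∆ T'}
  have hW : ∀ v, v ∈ W ↔ p v ∈ W := fun v ↦ by
    simp only [W, mem_filter_univ, hp v, or_comm]
  have hTT' : T ∆ T' ⊆ U := symmDiff_le_sup.trans (union_subset hT hT')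
  have hWU : W ∩ U = T ∆ T' := by grind
  refine card_le_card_of_injOn (· ∆ W) (fun S hS ↦ ?_) (symmDiff_left_injective W).injOn
  obtain ⟨hS, hSU⟩ := mem_filter.1 hS
  refine mem_filter.2 ⟨symmDiff_mem_transversals hS hW, ?_⟩
  calc (S ∆ W) ∩ U = (S ∩ U) ∆ (W ∩ U) := inf_symmDiff_distrib_right S W U
    _ = T' := by rw [hSU, hWU, symmDiff_symmDiff_cancel_left]

theorem card_transversals_filter_inter (hp : Involutive p) {U : Finset V}
    (hU : ∀ v ∈ U, p v ∉ U) (P : Finset V → Prop) [DecidablePred P] :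
    #{S ∈ transversals p | P (S ∩ U)} * 2 ^ #U =
      #{T ∈ U.powerset | P T} * #(transversals p) := by
  have hfibre (Q : Finset V → Prop) [DecidablePred Q] :
      #{S ∈ transversals p | Q (S ∩ U)} =
        #{T ∈ U.powerset | Q T} * #{S ∈ transversals p | S ∩ U = ∅} := by
    rw [card_eq_sum_card_fiberwise (f := (· ∩ U)) (t := {T ∈ U.powerset | Q T})
      (fun S hS ↦ by simp_all)]
    refine sum_const_nat fun T hT ↦ ?_
    obtain ⟨hTU, hQ⟩ := mem_filter.1 hT
    rw [mem_powerset] at hTU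
    rw [filter_filter, filter_congr (q := (· ∩ U = T)) (by grind)]
    exact (card_transversals_inter_eq_le hp hU hTU (empty_subset U)).antisymm
      (card_transversals_inter_eq_le hp hU (empty_subset U) hTU)
  have htotal := hfibre fun _ ↦ True
  simp only [filter_true, card_powerset] at htotal
  rw [hfibre P, htotal]
  ring

end Transversals

section PairCount

variable {V : Type*} [DecidableEq V] {p : V → V}

/-- The number of pairs `{v, p v}` contained in `e`. The points of `e` lying in such pairs are
counted twice over, which makes the division exact when `p` is a pairing. -/
def pairCount (p : V → V) (e : Finset V) : ℕ :=
  #{v ∈ e | p v ∈ e} / 2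

theorem two_mul_pairCount (hp : Involutive p) (hp_ne : ∀ v, p v ≠ v) (e : Finset V) :
    2 * pairCount p e = #{v ∈ e | p v ∈ e} := by
  have hmod : (#{v ∈ e | p v ∈ e} : ZMod 2) = 0 := by
    rw [← nsmul_one, ← sum_const]
    exact sum_involution (fun v _ ↦ p v) (fun _ _ ↦ by decide) (fun v _ _ ↦ hp_ne v)
      (fun v hv ↦ by grind [Involutive]) fun v _ ↦ hp v
  exact Nat.mul_div_cancel' ((ZMod.natCast_eq_zero_iff _ _).1 hmod)

variable [Fintype V]

theorem card_filter_mem_eq_two_mul_card_inter (hp : Involutive p) (e : Finset V) {S : Finset V}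
    (hS : S ∈ transversals p) :
    #{v ∈ e | p v ∈ e} = 2 * #({v ∈ e | p v ∈ e} ∩ S) := by
  set A : Finset V := {v ∈ e | p v ∈ e}
  have himage : (A ∩ S).image p = A \ S := by
    have := mem_transversals.1 hS
    ext v
    grind [Involutive]
  rw [← card_inter_add_card_sdiff A S, ← himage, card_image_of_injective _ hp.injective, two_mul]

theorem card_inter_transversal (hp : Involutive p) (e : Finset V) {S : Finset V}
    (hS : S ∈ transversals p) :
    #(e ∩ S) = pairCount p e + #(S ∩ {v ∈ e | p v ∉ e}) := by
  have hpairs := card_filter_mem_eq_two_mul_card_inter hp e hS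
  have hsplit := card_filter_add_card_filter_not (s := e ∩ S) (p := fun v ↦ p v ∈ e)
  rw [← filter_inter, ← filter_inter, inter_comm _ S] at hsplit
  grind [pairCount]

-- For `s < pairCount p e` the truncated `s - pairCount p e` is the intended threshold `0`.
theorem card_transversals_le_card_inter (hp : Involutive p) (hp_ne : ∀ v, p v ≠ v)
    (e : Finset V) (s : ℕ) :
    (#{S ∈ transversals p | s ≤ #(e ∩ S)} : ℚ) =
      coinTail (#e - 2 * pairCount p e) (s - pairCount p e) * #(transversals p) := by
  set U : Finset V := {v ∈ e | p v ∉ e}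
  set t := s - pairCount p e
  have hUcard : #U = #e - 2 * pairCount p e := by
    rw [two_mul_pairCount hp hp_ne, ← card_filter_add_card_filter_not (s := e) (p · ∈ e),
      Nat.add_sub_cancel_left]
  have hU : ∀ v ∈ U, p v ∉ U := by grind
  have hthreshold : {S ∈ transversals p | s ≤ #(e ∩ S)} = {S ∈ transversals p | t ≤ #(S ∩ U)} :=
    filter_congr fun S hS ↦ by rw [card_inter_transversal hp e hS, tsub_le_iff_left]
  have huniform : (#{S ∈ transversals p | t ≤ #(S ∩ U)} : ℚ) * 2 ^ #U =
      #{T ∈ U.powerset | t ≤ #T} * #(transversals p) := by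
    exact_mod_cast card_transversals_filter_inter hp hU (t ≤ #·)
  rw [card_filter_powerset_le_card, mul_right_comm] at huniform
  rw [hthreshold, ← hUcard]
  exact mul_right_cancel₀ (by positivity) huniform

theorem exists_transversal_card_le_sum_coinTail (hp : Involutive p) (hp_ne : ∀ v, p v ≠ v)
    (F : Finset (Finset V)) (s : ℕ) :
    ∃ S ∈ transversals p, (#{e ∈ F | s ≤ #(e ∩ S)} : ℚ) ≤
      ∑ e ∈ F, coinTail (#e - 2 * pairCount p e) (s - pairCount p e) := by
  refine exists_le_of_sum_le (transversals_nonempty hp hp_ne) (le_of_eq ?_)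
  calc ∑ S ∈ transversals p, (#{e ∈ F | s ≤ #(e ∩ S)} : ℚ)
      = ∑ e ∈ F, (#{S ∈ transversals p | s ≤ #(e ∩ S)} : ℚ) := by
        exact_mod_cast sum_card_bipartiteAbove_eq_sum_card_bipartiteBelow fun S e ↦ s ≤ #(e ∩ S)
    _ = ∑ e ∈ F, coinTail (#e - 2 * pairCount p e) (s - pairCount p e) * #(transversals p) :=
        sum_congr rfl fun e _ ↦ card_transversals_le_card_inter hp hp_ne e s
    _ = _ := by rw [← sum_mul, sum_const, nsmul_eq_mul, mul_comm]

theorem two_mul_sum_pairCount_le (hp : Involutive p) (hp_ne : ∀ v, p v ≠ v)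
    {F : Finset (Finset V)} {q : ℕ} (hpair : ∀ v, #{e ∈ F | v ∈ e ∧ p v ∈ e} ≤ q) :
    2 * ∑ e ∈ F, pairCount p e ≤ q * Fintype.card V := by
  calc 2 * ∑ e ∈ F, pairCount p e
      = ∑ e ∈ F, #{v | v ∈ e ∧ p v ∈ e} := by
        rw [mul_sum]
        exact sum_congr rfl fun e _ ↦ by rw [two_mul_pairCount hp hp_ne]; congr 1; grind
    _ = ∑ v, #{e ∈ F | v ∈ e ∧ p v ∈ e} :=
        sum_card_bipartiteAbove_eq_sum_card_bipartiteBelow fun e v ↦ v ∈ e ∧ p v ∈ e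
    _ ≤ ∑ _v : V, q := sum_le_sum fun v _ ↦ hpair v
    _ = q * Fintype.card V := by rw [sum_const, card_univ, smul_eq_mul, mul_comm]

omit [Fintype V] in
theorem sum_pairCount_le [Finite V] (hp : Involutive p) (hp_ne : ∀ v, p v ≠ v)
    {F : Finset (Finset V)} {k ℓ q : ℕ} (hF : ∀ e ∈ F, #e = k) (hℓ : 0 < ℓ)
    (hdeg : ∀ v, ℓ ≤ #{e ∈ F | v ∈ e}) (hpair : ∀ v, #{e ∈ F | v ∈ e ∧ p v ∈ e} ≤ q) :
    (∑ e ∈ F, pairCount p e : ℚ) ≤ q * k / (2 * ℓ) * #F := by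
  have := Fintype.ofFinite V
  have hincidences : Fintype.card V * ℓ ≤ #F * k := (le_sum_card hdeg).trans_eq (sum_const_nat hF)
  have h : (∑ e ∈ F, pairCount p e) * (2 * ℓ) ≤ q * k * #F := calc
    (∑ e ∈ F, pairCount p e) * (2 * ℓ) = 2 * (∑ e ∈ F, pairCount p e) * ℓ := by ring
    _ ≤ q * Fintype.card V * ℓ := Nat.mul_le_mul_right ℓ (two_mul_sum_pairCount_le hp hp_ne hpair)
    _ = q * (Fintype.card V * ℓ) := by ring
    _ ≤ q * (#F * k) := by gcongr
    _ = q * k * #F := by ring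
  rw [div_mul_eq_mul_div, le_div_iff₀ (by positivity)]
  exact_mod_cast h

end PairCount

/-- Here `a + b * j` majorizes the probability that a random transversal meets a `k`-set containing
`j` pairs in at least `s` points, and `q * k / (2 * ℓ)` bounds the average number of pairs. -/
theorem hexagon_s3_pairing_upper_general {V : Type*} [Fintype V] [DecidableEq V]
    {k ℓ q s : ℕ} {F : Finset (Finset V)} {p : V → V} {a b : ℚ}
    (hF : ∀ e ∈ F, #e = k) (hℓ : 0 < ℓ) (hdeg : ∀ v, ℓ ≤ #{e ∈ F | v ∈ e})
    (hpair : ∀ v, #{e ∈ F | v ∈ e ∧ p v ∈ e} ≤ q)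
    (hp : Involutive p) (hp_ne : ∀ v, p v ≠ v) (hb : 0 ≤ b)
    (htail : ∀ j, 2 * j ≤ k → coinTail (k - 2 * j) (s - j) ≤ a + b * j) :
    ∃ S ∈ transversals p,
      (#{e ∈ F | s ≤ #(e ∩ S)} : ℚ) ≤ (a + b * (q * k / (2 * ℓ))) * #F := by
  have hpairs_le (e) (he : e ∈ F) : 2 * pairCount p e ≤ k := by
    rw [two_mul_pairCount hp hp_ne, ← hF e he]
    exact card_filter_le e _
  obtain ⟨S, hS, hcard⟩ := exists_transversal_card_le_sum_coinTail hp hp_ne F s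
  refine ⟨S, hS, hcard.trans ?_⟩
  calc ∑ e ∈ F, coinTail (#e - 2 * pairCount p e) (s - pairCount p e)
      ≤ ∑ e ∈ F, (a + b * pairCount p e) :=
        sum_le_sum fun e he ↦ by rw [hF e he]; exact htail _ (hpairs_le e he)
    _ = a * #F + b * ∑ e ∈ F, (pairCount p e : ℚ) := by
        rw [sum_add_distrib, sum_const, nsmul_eq_mul, mul_comm, mul_sum]
    _ ≤ a * #F + b * (q * k / (2 * ℓ) * #F) := by
        gcongr
        exact sum_pairCount_le hp hp_ne hF hℓ hdeg hpair
    _ = (a + b * (q * k / (2 * ℓ))) * #F := by ring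

-- The four probabilities are `21/32, 11/16, 3/4, 1`; the line passes through the first and last.
theorem coinTail_six_three_le (j : ℕ) (hj : 2 * j ≤ 6) :
    coinTail (6 - 2 * j) (3 - j) ≤ 21 / 32 + 11 / 96 * j := by
  have : j ≤ 3 := by lia
  interval_cases j <;> norm_num [coinTail, Nat.choose, sum_Icc_succ_top]

/-- Hexagon game on the hexagonal grid (`k = 6`, `ℓ = 3`, `q = 2`), threshold `s = 3`:
for every pairing `p` there is a transversal `S` such that the number of `e ∈ F` with
`|e ∩ S| ≥ 3` is at most `85n/96`. -/
theorem hexagon_s3_pairing_upper {V : Type*} [Fintype V] [DecidableEq V]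
    (n : ℕ) (F : Finset (Finset V)) (hn : F.card = n)
    (hF : ∀ e ∈ F, e.card = 6)
    (hdeg : ∀ v : V, (F.filter (fun e => v ∈ e)).card = 3)
    (hpair : ∀ u v : V, u ≠ v → (F.filter (fun e => u ∈ e ∧ v ∈ e)).card ≤ 2)
    (p : V → V) (hp_inv : ∀ v, p (p v) = v) (hp_ne : ∀ v, p v ≠ v) :
    ∃ S : Finset V, (∀ v, v ∈ S ↔ p v ∉ S) ∧
      96 * (F.filter (fun e => 3 ≤ (e ∩ S).card)).card ≤ 85 * n := by
  obtain ⟨S, hS, hcard⟩ := hexagon_s3_pairing_upper_general hF three_pos (fun v ↦ (hdeg v).ge)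
    (fun v ↦ hpair v (p v) (hp_ne v).symm) hp_inv hp_ne (by norm_num) coinTail_six_three_le
  refine ⟨S, mem_transversals.1 hS, ?_⟩
  rify at hcard ⊢
  rw [← hn]
  linarith
end
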